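/- Let m ≥ 1 and let (u_1, v_1), ..., (u_m, v_m) ∈ [0,1] × ℝ with u_1 < ... < u_m. Suppose for each subset X ⊆ {1, ..., m} there is a function f_X : [0,1] → ℝ such that f_X(u_i) > v_i for every i ∈ X and f_X(u_i) < v_i for every i ∉ X. Then there exist weights w_X ∈ [0,1] for X ⊆ {1,...,m} with ∑_X w_X = 1 such that the function f = ∑_X w_X · f_X satisfies f(u_i) = v_i for all 1 ≤ i ≤ m. -/

import Mathlib

/-! Let `C` be a convex set of vectors meeting every closed orthant with apex `v`. To find a point
of `C` agreeing with `v` in one more coordinate `a`, take two points of `C` on the same side of `v`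
in all other coordinates but on opposite sides in coordinate `a`: the segment joining them crosses
the hyperplane `x a = v a` and does not change sides elsewhere. Doing this for all coordinates
gives `v ∈ C`. Here `C` is the set of vectors `(f (uᵢ))ᵢ` for `f` a convex combination of
the `f_X`, and the vector of `f_X` lies in the orthant prescribed by `X`. -/

section Order

open Set

variable {ι α : Type*}

/-- The vectors lying weakly above `v` in every coordinate of `A` and weakly below `v` in every
coordinate of `B`. For `B = Aᶜ` this is a closed orthant with apex `v`. The sets `A` and `B` may
overlap: a coordinate in `A ∩ B` is forced to agree with `v`. -/
def coordinateCone [Preorder α] (v : ι → α) (A B : Set ι) : Set (ι → α) :=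
  A.pi (fun i ↦ Ici (v i)) ∩ B.pi (fun i ↦ Iic (v i))

theorem coordinateCone_anti [Preorder α] (v : ι → α) {A A' B B' : Set ι} (hA : A ⊆ A')
    (hB : B ⊆ B') : coordinateCone v A' B' ⊆ coordinateCone v A B :=
  inter_subset_inter (pi_mono' (fun _ _ ↦ Subset.rfl) hA) (pi_mono' (fun _ _ ↦ Subset.rfl) hB)

theorem coordinateCone_univ_univ [PartialOrder α] (v : ι → α) :
    coordinateCone v univ univ = {v} := by
  rw [coordinateCone, pi_univ_Ici, pi_univ_Iic, Ici_inter_Iic, Icc_self]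

end Order

section Convex

open Set

variable {𝕜 ι : Type*} [Field 𝕜] [LinearOrder 𝕜] [IsStrictOrderedRing 𝕜]

theorem convex_coordinateCone (v : ι → 𝕜) (A B : Set ι) : Convex 𝕜 (coordinateCone v A B) :=
  (convex_pi fun i _ ↦ convex_Ici (v i)).inter (convex_pi fun i _ ↦ convex_Iic (v i))

theorem exists_mem_linearMap_eq_of_convex {E : Type*} [AddCommGroup E] [Module 𝕜 E] {S : Set E}
    (hS : Convex 𝕜 S) (f : E →ₗ[𝕜] 𝕜) {c : 𝕜} {x y : E} (hx : x ∈ S) (hy : y ∈ S)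
    (hxc : f x ≤ c) (hcy : c ≤ f y) : ∃ z ∈ S, f z = c :=
  (hS.linear_image f).ordConnected.out (mem_image_of_mem f hx) (mem_image_of_mem f hy) ⟨hxc, hcy⟩

variable {C : Set (ι → 𝕜)} {v : ι → 𝕜} {A B : Set ι}

theorem inter_coordinateCone_insert_insert_nonempty (hC : Convex 𝕜 C) {a : ι}
    (habove : (C ∩ coordinateCone v (insert a A) B).Nonempty)
    (hbelow : (C ∩ coordinateCone v A (insert a B)).Nonempty) :
    (C ∩ coordinateCone v (insert a A) (insert a B)).Nonempty := by
  obtain ⟨y, hyC, hy⟩ := habove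
  obtain ⟨x, hxC, hx⟩ := hbelow
  have hyS : y ∈ C ∩ coordinateCone v A B :=
    ⟨hyC, coordinateCone_anti v (subset_insert a A) Subset.rfl hy⟩
  have hxS : x ∈ C ∩ coordinateCone v A B :=
    ⟨hxC, coordinateCone_anti v Subset.rfl (subset_insert a B) hx⟩
  obtain ⟨z, ⟨hzC, hzA, hzB⟩, hza : z a = v a⟩ :=
    exists_mem_linearMap_eq_of_convex (hC.inter (convex_coordinateCone v A B)) (LinearMap.proj a)
      hxS hyS (hx.2 a (mem_insert a B)) (hy.1 a (mem_insert a A))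
  simp only [coordinateCone, insert_pi]
  exact ⟨z, hzC, ⟨hza.ge, hzA⟩, ⟨hza.le, hzB⟩⟩

theorem inter_coordinateCone_nonempty_of_finite_inter (hC : Convex 𝕜 C)
    (h : ∀ X : Set ι, (C ∩ coordinateCone v X Xᶜ).Nonempty) (hAB : (A ∩ B).Finite) :
    (C ∩ coordinateCone v A B).Nonempty := by
  generalize hs : A ∩ B = s at hAB
  induction s, hAB using Set.Finite.induction_on generalizing A B with
  | empty =>
    have hBA : B ⊆ Aᶜ := (disjoint_iff_inter_eq_empty.2 hs).subset_compl_left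
    exact (h A).mono (inter_subset_inter_right C (coordinateCone_anti v Subset.rfl hBA))
  | @insert a s _ _ ih =>
    have hA : insert a (A \ {a}) = A := insert_sdiff_self_of_mem (by grind)
    have hB : insert a (B \ {a}) = B := insert_sdiff_self_of_mem (by grind)
    have habove : (C ∩ coordinateCone v (insert a (A \ {a})) (B \ {a})).Nonempty :=
      ih (by grind)
    have hbelow : (C ∩ coordinateCone v (A \ {a}) (insert a (B \ {a}))).Nonempty :=
      ih (by grind)
    simpa only [hA, hB] using inter_coordinateCone_insert_insert_nonempty hC habove hbelow

theorem mem_of_convex_of_forall_inter_coordinateCone_nonempty [Finite ι] (hC : Convex 𝕜 C)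
    (h : ∀ X : Set ι, (C ∩ coordinateCone v X Xᶜ).Nonempty) : v ∈ C := by
  have hv : (C ∩ coordinateCone v univ univ).Nonempty :=
    inter_coordinateCone_nonempty_of_finite_inter hC h (toFinite _)
  rwa [coordinateCone_univ_univ, inter_singleton_nonempty] at hv

end Convex

theorem convex_combination_interpolates_general {𝕜 ι α : Type*} [Field 𝕜] [LinearOrder 𝕜]
    [IsStrictOrderedRing 𝕜] [Fintype ι] (u : ι → α) (v : ι → 𝕜) (F : Finset ι → α → 𝕜)
    (hF : ∀ X : Finset ι, ∀ i : ι,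
      (i ∈ X → v i ≤ F X (u i)) ∧ (i ∉ X → F X (u i) ≤ v i)) :
    ∃ w : Finset ι → 𝕜,
      (∀ X, w X ∈ Set.Icc (0 : 𝕜) 1) ∧
      (∑ X : Finset ι, w X) = 1 ∧
      ∀ i : ι, (∑ X : Finset ι, w X * F X (u i)) = v i := by
  classical
  let M : Matrix (Finset ι) ι 𝕜 := Matrix.of fun X i ↦ F X (u i)
  have hC : Convex 𝕜 (M.vecMulLinear '' stdSimplex 𝕜 (Finset ι)) :=
    (convex_stdSimplex 𝕜 (Finset ι)).linear_image _
  have hrow (X : Finset ι) : M X ∈ M.vecMulLinear '' stdSimplex 𝕜 (Finset ι) :=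
    ⟨Pi.single X 1, single_mem_stdSimplex 𝕜 X, Matrix.single_one_vecMul X M⟩
  obtain ⟨w, hw, hwv⟩ : v ∈ M.vecMulLinear '' stdSimplex 𝕜 (Finset ι) := by
    refine mem_of_convex_of_forall_inter_coordinateCone_nonempty hC fun X ↦
      ⟨M X.toFinset, hrow X.toFinset, fun i hi ↦ ?_, fun i hi ↦ ?_⟩
    · exact (hF X.toFinset i).1 (Set.mem_toFinset.2 hi)
    · exact (hF X.toFinset i).2 (mt Set.mem_toFinset.1 hi)
  exact ⟨w, mem_Icc_of_mem_stdSimplex hw, hw.2, congrFun hwv⟩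

/-- Given `m ≥ 1` points `(uᵢ, vᵢ) ∈ [0,1] × ℝ` with `u` strictly increasing, and for each
subset `X ⊆ {1,…,m}` a function `f_X` with `f_X(uᵢ) > vᵢ` for `i ∈ X` and `f_X(uᵢ) < vᵢ`
for `i ∉ X`, some convex combination `∑_X w_X f_X` passes through all `m` points. -/
theorem convex_combination_interpolates (m : ℕ) (hm : 1 ≤ m) (u v : Fin m → ℝ)
    (hu : StrictMono u) (huI : ∀ i, u i ∈ Set.Icc (0:ℝ) 1)
    (F : Finset (Fin m) → ℝ → ℝ)
    (hF : ∀ X : Finset (Fin m), ∀ i : Fin m,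
      (i ∈ X → v i < F X (u i)) ∧ (i ∉ X → F X (u i) < v i)) :
    ∃ w : Finset (Fin m) → ℝ,
      (∀ X, w X ∈ Set.Icc (0:ℝ) 1) ∧
      (∑ X : Finset (Fin m), w X) = 1 ∧
      ∀ i : Fin m, (∑ X : Finset (Fin m), w X * F X (u i)) = v i :=
  convex_combination_interpolates_general u v F fun X i ↦
    ⟨fun hi ↦ ((hF X i).1 hi).le, fun hi ↦ ((hF X i).2 hi).le⟩
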